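/- Both of the following hold as n → ∞: (i) Σ_{s=1}^{⌊0.99n⌋} Σ_{g=2}^{min{s+1, ⌊(n−s)/2⌋}} c_{s,g} → 0; and (ii) for any sequence k = k(n) with k(n) → ∞, Σ_{s=k(n)}^{⌊0.99n⌋} c_{s,1} → 0. -/

import Mathlib

open MeasureTheory Filter

namespace RandomHypercube

/-- Index of a (potential) hypercube edge: the lower endpoint `A` together with the
direction `i` that is added, representing the edge from `A` to `A ∪ {i}`. -/
abbrev EdgeIdx (n : ℕ) := Finset (Fin n) × Fin n

/-- The sample space: an i.i.d. Uniform[0,1] weight for each edge index. -/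
abbrev CubeOmega (n : ℕ) := EdgeIdx n → ℝ

/-- The product of uniform measures on [0,1], one for each edge. -/
noncomputable def cubeMeasure (n : ℕ) : Measure (CubeOmega n) :=
  Measure.pi fun _ => (volume : Measure ℝ).restrict (Set.Icc 0 1)

/-- The vertex visited by the direct path associated to the permutation `σ`
just before taking its `j`-th step: the image under `σ` of `{0, …, j-1}`. -/
def initSeg (n : ℕ) (σ : Equiv.Perm (Fin n)) (j : Fin n) : Finset (Fin n) :=
  (Finset.univ.filter fun i => i < j).image σ

/-- The edge used in the `j`-th step of the direct path associated to `σ`. -/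
def pathEdge (n : ℕ) (σ : Equiv.Perm (Fin n)) (j : Fin n) : EdgeIdx n :=
  (initSeg n σ j, σ j)

/-- The direct path associated to `σ` is accessible if its successive edge
weights are strictly increasing. -/
def Accessible (n : ℕ) (σ : Equiv.Perm (Fin n)) (ω : CubeOmega n) : Prop :=
  StrictMono fun j : Fin n => ω (pathEdge n σ j)

/-- The number of accessible direct paths from `∅` to `[n]`. -/
noncomputable def X (n : ℕ) (ω : CubeOmega n) : ℕ :=
  Nat.card {σ : Equiv.Perm (Fin n) // Accessible n σ ω}


/-- The set of steps `j` at which the direct paths of `σ` and `σ'` use the same edge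
(shared edges necessarily occur at the same level in both paths). -/
def sharedSteps (n : ℕ) (σ σ' : Equiv.Perm (Fin n)) : Finset (Fin n) :=
  Finset.univ.filter fun j => pathEdge n σ j = pathEdge n σ' j

/-- Given the sorted list `l` of steps (levels) of the shared edges, the gap vector:
the number of edges before the first shared edge, strictly between consecutive shared
edges, and after the last shared edge. -/
def gapsOfList (n : ℕ) (l : List ℕ) : List ℕ :=
  List.zipWith (fun a b => b - a) (0 :: l.map (· + 1)) (l ++ [n])

/-- The gap vector of the direct path of `σ'` relative to that of `σ`. -/
def gapVector (n : ℕ) (σ σ' : Equiv.Perm (Fin n)) : List ℕ :=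
  gapsOfList n (((sharedSteps n σ σ').sort (· ≤ ·)).map Fin.val)

/-- The number of (nontrivial) gaps between the direct paths of `σ` and `σ'`:
the number of nonzero entries of the gap vector. -/
def numGaps (n : ℕ) (σ σ' : Equiv.Perm (Fin n)) : ℕ :=
  ((gapVector n σ σ').filter (· != 0)).length

/-- The probability that the direct paths of `σ` and `σ'` are both accessible. -/
noncomputable def pairProb (n : ℕ) (σ σ' : Equiv.Perm (Fin n)) : ℝ :=
  (cubeMeasure n {ω | Accessible n σ ω ∧ Accessible n σ' ω}).toReal

/-- `c n s g`: the sum, over all ordered pairs of direct paths sharing exactly `s`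
edges with `g` gaps, of the probability that both paths are accessible. -/
noncomputable def c (n s g : ℕ) : ℝ :=
  ∑ p ∈ Finset.univ.filter
      (fun p : Equiv.Perm (Fin n) × Equiv.Perm (Fin n) =>
        (sharedSteps n p.1 p.2).card = s ∧ numGaps n p.1 p.2 = g),
    pairProb n p.1 p.2

/-- `w m`: the number of direct paths from `∅` to `[m]` in the `m`-dimensional hypercube
that are edge-disjoint from the canonical path (the identity permutation). -/
noncomputable def w (m : ℕ) : ℕ :=
  Nat.card {σ : Equiv.Perm (Fin m) // sharedSteps m σ 1 = ∅}

end RandomHypercube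

section
open Finset

lemma comb {V α : Type*} [Fintype V] [DecidableEq V] [LinearOrder α] (n M : ℕ) (p q : Fin n → V)
    (hpq : ∀ i j, p i = q j → i = j) (hp : Function.Injective p) (hq : Function.Injective q)
    (hs : ∀ v, ∃ i, p i = v ∨ q i = v)
    (hK : (univ.filter fun i => p i ≠ q i).card = M) (r : V → α) (hr : Function.Injective r) :
    (univ.filter fun π : Equiv.Perm V => StrictMono (fun i => r (π (p i))) ∧
      StrictMono (fun i => r (π (q i)))).card ≤ (2 * M).choose M := by
  classical
  set K := univ.filter fun i => p i ≠ q i with hKdef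
  set A := K.image p with hA
  set B := K.image q with hB
  have hAB : Disjoint A B := by
    rw [Finset.disjoint_left]
    intro x hx hx'
    obtain ⟨i, hi, rfl⟩ := mem_image.1 hx
    obtain ⟨j, hj, e⟩ := mem_image.1 hx'
    have := hpq i j e.symm
    subst this
    simp [hKdef] at hi
    exact hi e.symm
  set D := A ∪ B with hD
  have cA : A.card = M := by rw [hA, card_image_of_injective _ hp, hK]
  have cB : B.card = M := by rw [hB, card_image_of_injective _ hq, hK]
  have cD : D.card = 2 * M := by rw [hD, card_union_of_disjoint hAB, cA, cB]; ring
  let rk : Equiv.Perm V → V → ℕ := fun π x => (D.filter fun y => r (π y) < r (π x)).card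
  have rk_lt : ∀ π, ∀ x ∈ D, ∀ y ∈ D, r (π x) < r (π y) → rk π x < rk π y := by
    intro π x hx y hy h
    apply card_lt_card
    rw [Finset.ssubset_iff_of_subset]
    · exact ⟨x, by simp [hx, h], by simp⟩
    · intro z hz
      simp only [mem_filter] at hz ⊢
      exact ⟨hz.1, hz.2.trans h⟩
  have rk_iff : ∀ π, ∀ x ∈ D, ∀ y ∈ D, (r (π x) < r (π y) ↔ rk π x < rk π y) := by
    intro π x hx y hy
    refine ⟨rk_lt π x hx y hy, fun h => ?_⟩
    by_contra h'
    rcases (not_lt.1 h').lt_or_eq with h1 | h1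
    · exact absurd (rk_lt π y hy x hx h1) (by omega)
    · have := π.injective (hr h1)
      subst this
      omega
  have rk_inj : ∀ π, Set.InjOn (rk π) D := by
    intro π x hx y hy h
    by_contra hne
    rcases lt_trichotomy (r (π x)) (r (π y)) with h1 | h1 | h1
    · exact absurd (rk_lt π x hx y hy h1) (by omega)
    · exact hne (π.injective (hr h1))
    · exact absurd (rk_lt π y hy x hx h1) (by omega)
  have rk_bd : ∀ π, ∀ x ∈ D, rk π x < 2 * M := by
    intro π x hx
    rw [← cD]
    apply card_lt_card
    rw [Finset.ssubset_iff_of_subset (filter_subset _ _)]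
    exact ⟨x, hx, by simp⟩
  have hAD : A ⊆ D := subset_union_left
  have hBD : B ⊆ D := subset_union_right
  have imD : ∀ π, D.image (rk π) = range (2 * M) := by
    intro π
    apply eq_of_subset_of_card_le
    · intro t ht
      obtain ⟨x, hx, rfl⟩ := mem_image.1 ht
      exact mem_range.2 (rk_bd π x hx)
    · rw [card_image_of_injOn (rk_inj π), cD, card_range]
  have imB : ∀ π, B.image (rk π) = range (2 * M) \ A.image (rk π) := by
    intro π
    rw [← imD π, hD, image_union, union_sdiff_left, Finset.sdiff_eq_self_iff_disjoint.2]
    rw [Finset.disjoint_left]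
    intro t ht ht'
    obtain ⟨x, hx, rfl⟩ := mem_image.1 ht
    obtain ⟨y, hy, e⟩ := mem_image.1 ht'
    have := rk_inj π (hAD hy) (hBD hx) e
    subst this
    exact Finset.disjoint_left.1 hAB hy hx
  have key : ∀ (u : Fin n → V) (π π' : Equiv.Perm V), StrictMono (fun i => r (π (u i))) →
      StrictMono (fun i => r (π' (u i))) → K.image u ⊆ D → 
      (K.image u).image (rk π) = (K.image u).image (rk π') → ∀ i ∈ K, rk π (u i) = rk π' (u i) := by
    intro u π π' h h' hu e i hi
    have m1 : StrictMono (fun k : K => rk π (u k)) := fun a b hab =>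
      rk_lt π _ (hu (mem_image_of_mem _ a.2)) _ (hu (mem_image_of_mem _ b.2)) (h hab)
    have m2 : StrictMono (fun k : K => rk π' (u k)) := fun a b hab =>
      rk_lt π' _ (hu (mem_image_of_mem _ a.2)) _ (hu (mem_image_of_mem _ b.2)) (h' hab)
    have := (StrictMono.range_inj m1 m2).1 (by
      ext t
      have := congrArg (fun s => t ∈ s) e
      simpa [mem_image] using this)
    exact congrFun this ⟨i, hi⟩
  rw [← card_range (2 * M), ← card_powersetCard]
  apply card_le_card_of_injOn (fun π => A.image (rk π))
  · intro π _
    simp only [mem_coe, mem_powersetCard]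
    refine ⟨?_, ?_⟩
    · rw [← imD π]; exact image_subset_image hAD
    · rw [card_image_of_injOn ((rk_inj π).mono (by exact_mod_cast hAD)), cA]
  · intro π hπ π' hπ' e
    simp only [coe_filter, Set.mem_ofPred_eq, mem_univ, true_and] at hπ hπ'
    simp only at e
    have kA := key p π π' hπ.1 hπ'.1 hAD e
    have kB := key q π π' hπ.2 hπ'.2 hBD (by
      change B.image _ = B.image _
      rw [imB, imB, e])
    have kD : ∀ x ∈ D, rk π x = rk π' x := by
      intro x hx
      rcases mem_union.1 hx with hx | hx
      · obtain ⟨i, hi, rfl⟩ := mem_image.1 hx; exact kA i hi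
      · obtain ⟨i, hi, rfl⟩ := mem_image.1 hx; exact kB i hi
    have memD : ∀ i, p i ≠ q i → p i ∈ D ∧ q i ∈ D := by
      intro i hi
      have : i ∈ K := by simp [hKdef, hi]
      exact ⟨hAD (mem_image_of_mem _ this), hBD (mem_image_of_mem _ this)⟩
    have ord : ∀ x y, r (π x) < r (π y) ↔ r (π' x) < r (π' y) := by
      intro x y
      by_cases hx : x ∈ D ∧ y ∈ D
      · rw [rk_iff π x hx.1 y hx.2, rk_iff π' x hx.1 y hx.2, kD x hx.1, kD y hx.2]
      · obtain ⟨i, hi⟩ := hs x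
        obtain ⟨j, hj⟩ := hs y
        have pp : ∀ i j, r (π (p i)) < r (π (p j)) ↔ r (π' (p i)) < r (π' (p j)) := fun i j =>
          hπ.1.lt_iff_lt.trans hπ'.1.lt_iff_lt.symm
        have qq : ∀ i j, r (π (q i)) < r (π (q j)) ↔ r (π' (q i)) < r (π' (q j)) := fun i j =>
          hπ.2.lt_iff_lt.trans hπ'.2.lt_iff_lt.symm
        have : p i = q i ∨ p j = q j := by
          by_contra hcon
          push Not at hcon
          apply hx
          constructor
          · rcases hi with rfl | rfl
            exacts [(memD i hcon.1).1, (memD i hcon.1).2]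
          · rcases hj with rfl | rfl
            exacts [(memD j hcon.2).1, (memD j hcon.2).2]
        rcases hi with rfl | rfl <;> rcases hj with rfl | rfl
        · exact pp i j
        · rcases this with h | h
          · rw [h]; exact qq i j
          · rw [← h]; exact pp i j
        · rcases this with h | h
          · rw [← h]; exact pp i j
          · rw [h]; exact qq i j
        · exact qq i j
    -- full ranks
    have full : ∀ (ρ : Equiv.Perm V) x, (univ.filter fun z => r (ρ z) < r (ρ x)).card
        = (univ.filter fun z => r z < r (ρ x)).card := by
      intro ρ x
      apply card_bij (fun z _ => ρ z)
      · intro a ha; simpa using ha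
      · intro a _ b _ h; exact ρ.injective h
      · intro b hb; exact ⟨ρ.symm b, by simpa using hb, by simp⟩
    have mono : ∀ x y, r x < r y → (univ.filter fun z => r z < r x).card < (univ.filter fun z => r z < r y).card := by
      intro x y h
      apply card_lt_card
      rw [Finset.ssubset_iff_of_subset]
      · exact ⟨x, by simp [h], by simp⟩
      · intro z hz
        simp only [mem_filter, mem_univ, true_and] at hz ⊢
        exact hz.trans h
    ext x
    have h1 : (univ.filter fun z => r z < r (π x)).card = (univ.filter fun z => r z < r (π' x)).card := by
      rw [← full, ← full]
      congr 1
      ext z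
      simp [ord z x]
    rcases lt_trichotomy (r (π x)) (r (π' x)) with h2 | h2 | h2
    · exact absurd (mono _ _ h2) (by omega)
    · exact hr h2
    · exact absurd (mono _ _ h2) (by omega)

end

lemma comb' {V : Type*} [Fintype V] [DecidableEq V] (n M : ℕ) (p q : Fin n → V)
    (hpq : ∀ i j, p i = q j → i = j) (hp : Function.Injective p) (hq : Function.Injective q)
    (hs : ∀ v, ∃ i, p i = v ∨ q i = v)
    (hK : (Finset.univ.filter fun i => p i ≠ q i).card = M) (ω : V → ℝ) :
    (Finset.univ.filter fun π : Equiv.Perm V => StrictMono (fun i => ω (π (p i))) ∧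
      StrictMono (fun i => ω (π (q i)))).card ≤ (2 * M).choose M := by
  classical
  let r : V → ℝ ×ₗ Fin (Fintype.card V) := fun v => toLex (ω v, Fintype.equivFin V v)
  have hr : Function.Injective r := by
    intro a b h
    have := congrArg (fun z => (ofLex z).2) h
    simpa [r] using this
  refine le_trans (Finset.card_le_card ?_) (comb n M p q hpq hp hq hs hK r hr)
  intro π hπ
  simp only [Finset.mem_filter, Finset.mem_univ, true_and] at hπ ⊢
  have hlt : ∀ a b, ω a < ω b → r a < r b := by
    intro a b h
    exact Prod.Lex.toLex_lt_toLex.2 (Or.inl h)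
  exact ⟨fun i j h => hlt _ _ (hπ.1 h), fun i j h => hlt _ _ (hπ.2 h)⟩

lemma measSM {ι : Type*} [Fintype ι] (n : ℕ) (p : Fin n → ι) :
    MeasurableSet {ω : ι → ℝ | StrictMono fun i => ω (p i)} := by
  have : {ω : ι → ℝ | StrictMono fun i => ω (p i)} =
      ⋂ i : Fin n, ⋂ j : Fin n, ⋂ (_ : i < j), {ω : ι → ℝ | ω (p i) < ω (p j)} := by
    ext ω
    simp [StrictMono]
  rw [this]
  refine MeasurableSet.iInter fun i => MeasurableSet.iInter fun j => MeasurableSet.iInter fun _ => ?_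
  exact measurableSet_lt (measurable_pi_apply _) (measurable_pi_apply _)

lemma probBound {ι : Type*} [Fintype ι] [DecidableEq ι] (μ : Measure ℝ) [IsProbabilityMeasure μ]
    (n M : ℕ) (p q : Fin n → ι)
    (hpq : ∀ i j, p i = q j → i = j) (hp : Function.Injective p) (hq : Function.Injective q)
    (hK : (Finset.univ.filter fun i => p i ≠ q i).card = M) :
    ((Measure.pi fun _ : ι => μ) {ω | StrictMono (fun i => ω (p i)) ∧
      StrictMono (fun i => ω (q i))}).toReal * ((n + M).factorial : ℝ) ≤ ((2 * M).choose M : ℝ) := by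
  classical
  set P := Measure.pi fun _ : ι => μ with hP
  set E := {ω : ι → ℝ | StrictMono (fun i => ω (p i)) ∧ StrictMono (fun i => ω (q i))} with hE
  have mE : MeasurableSet E := (measSM n p).inter (measSM n q)
  set U : Finset ι := Finset.univ.image p ∪ Finset.univ.image q with hU
  have cU : U.card = n + M := by
    have : U = Finset.univ.image p ∪ (Finset.univ.filter fun i => p i ≠ q i).image q := by
      ext x
      simp only [hU, Finset.mem_union, Finset.mem_image, Finset.mem_univ, true_and, Finset.mem_filter]
      constructor
      · rintro (h | ⟨i, rfl⟩)
        · exact Or.inl h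
        · by_cases h : p i = q i
          · exact Or.inl ⟨i, h⟩
          · exact Or.inr ⟨i, h, rfl⟩
      · rintro (h | ⟨i, _, rfl⟩)
        · exact Or.inl h
        · exact Or.inr ⟨i, rfl⟩
    rw [this, Finset.card_union_of_disjoint, Finset.card_image_of_injective _ hp,
      Finset.card_image_of_injective _ hq, hK]
    · simp
    · rw [Finset.disjoint_left]
      intro x hx hx'
      simp only [Finset.mem_image, Finset.mem_univ, true_and, Finset.mem_filter] at hx hx'
      obtain ⟨i, rfl⟩ := hx
      obtain ⟨j, hj, e⟩ := hx'
      have := hpq i j e.symm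
      subst this
      exact hj e.symm
  let V := {x // x ∈ U}
  let p' : Fin n → V := fun i => ⟨p i, by simp [hU]⟩
  let q' : Fin n → V := fun i => ⟨q i, by simp [hU]⟩
  let ex : Equiv.Perm V → Equiv.Perm ι := fun π => Equiv.Perm.ofSubtype π
  have pres : ∀ τ : Equiv.Perm ι, P ((fun ω : ι → ℝ => fun x => ω (τ x)) ⁻¹' E) = P E := by
    intro τ
    have := (measurePreserving_piCongrLeft (fun _ : ι => μ) τ.symm).measure_preimage mE.nullMeasurableSet
    rw [← hP] at this
    rw [← this]
    congr 1
    ext ω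
    have : (MeasurableEquiv.piCongrLeft (fun _ : ι => ℝ) τ.symm) ω = fun x => ω (τ x) := by
      funext x
      have h := MeasurableEquiv.piCongrLeft_apply_apply (e := τ.symm) (β := fun _ => ℝ) ω (τ x)
      simpa using h
    simp only [Set.mem_preimage]
    rw [this]
  have cnt : ∀ ω : ι → ℝ, (Finset.univ.filter fun π : Equiv.Perm V =>
      (fun x => ω (ex π x)) ∈ E).card ≤ (2 * M).choose M := by
    intro ω
    have hh := comb' n M p' q' (fun i j h => hpq i j (congrArg Subtype.val h))
      (fun i j h => hp (congrArg Subtype.val h)) (fun i j h => hq (congrArg Subtype.val h))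
      (by
        rintro ⟨v, hv⟩
        simp only [hU, Finset.mem_union, Finset.mem_image, Finset.mem_univ, true_and] at hv
        rcases hv with ⟨i, rfl⟩ | ⟨i, rfl⟩
        · exact ⟨i, Or.inl rfl⟩
        · exact ⟨i, Or.inr rfl⟩)
      (by
        rw [← hK]
        congr 1
        ext i
        simp only [Finset.mem_filter, Finset.mem_univ, true_and, p', q', ne_eq]
        exact not_congr Subtype.ext_iff) (fun v => ω v)
    refine le_trans (le_of_eq ?_) hh
    congr 1
    ext π
    have e1 : ∀ i, ex π (p i) = π (p' i) := fun i => Equiv.Perm.ofSubtype_apply_coe π (p' i)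
    have e2 : ∀ i, ex π (q i) = π (q' i) := fun i => Equiv.Perm.ofSubtype_apply_coe π (q' i)
    simp [hE, e1, e2]
  have meas : ∀ π : Equiv.Perm V, MeasurableSet ((fun ω : ι → ℝ => fun x => ω (ex π x)) ⁻¹' E) := by
    intro π
    apply mE.preimage
    exact measurable_pi_lambda _ fun x => measurable_pi_apply _
  have main : ((n + M).factorial : ENNReal) * P E ≤ ((2 * M).choose M : ENNReal) := by
    calc ((n + M).factorial : ENNReal) * P E = ∑ π : Equiv.Perm V, P E := by
            simp only [Finset.sum_const, Finset.card_univ, Fintype.card_perm, nsmul_eq_mul]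
            rw [Fintype.card_coe, cU]
      _ = ∑ π : Equiv.Perm V, ∫⁻ ω, ((fun ω : ι → ℝ => fun x => ω (ex π x)) ⁻¹' E).indicator 1 ω ∂P := by
            refine Finset.sum_congr rfl fun π _ => ?_
            rw [lintegral_indicator_one (meas π), pres]
      _ = ∫⁻ ω, ∑ π : Equiv.Perm V, ((fun ω : ι → ℝ => fun x => ω (ex π x)) ⁻¹' E).indicator 1 ω ∂P := by
            rw [lintegral_finsetSum]
            intro π _
            exact measurable_one.indicator (meas π)
      _ ≤ ∫⁻ ω, ((2 * M).choose M : ENNReal) ∂P := by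
            apply lintegral_mono
            intro ω
            refine le_trans (le_of_eq ?_) (Nat.cast_le.2 (cnt ω))
            rw [Finset.card_filter]
            push_cast
            refine Finset.sum_congr rfl fun π _ => ?_
            simp [Set.indicator_apply]
      _ = ((2 * M).choose M : ENNReal) := by simp [hP]
  have := ENNReal.toReal_mono (by simp) main
  rw [ENNReal.toReal_mul] at this
  simp only [ENNReal.toReal_natCast] at this
  linarith


namespace RandomHypercube

def gapsFrom (n a : ℕ) (l : List ℕ) : List ℕ :=
  List.zipWith (fun a b => b - a) (a :: l.map (· + 1)) (l ++ [n])

lemma gapsFrom_nil (n a : ℕ) : gapsFrom n a [] = [n - a] := rfl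
lemma gapsFrom_cons (n a x : ℕ) (l : List ℕ) :
    gapsFrom n a (x :: l) = (x - a) :: gapsFrom n (x + 1) l := rfl

def okL (n : ℕ) : ℕ → List ℕ → Prop
  | a, [] => a ≤ n
  | a, x :: l => a ≤ x ∧ okL n (x + 1) l

lemma gapsFrom_length (n : ℕ) (l : List ℕ) : ∀ a, (gapsFrom n a l).length = l.length + 1 := by
  induction l with
  | nil => intro a; rfl
  | cons x l ih => intro a; rw [gapsFrom_cons]; simp [ih]

lemma gapsFrom_sum (n : ℕ) (l : List ℕ) :
    ∀ a, okL n a l → (gapsFrom n a l).sum + l.length + a = n := by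
  induction l with
  | nil => intro a h; simp only [okL] at h; simp [gapsFrom_nil]; omega
  | cons x l ih =>
    intro a h
    simp only [okL] at h
    have := ih _ h.2
    rw [gapsFrom_cons]
    simp
    omega

lemma gapsFrom_inj (n : ℕ) (l : List ℕ) :
    ∀ a l', okL n a l → okL n a l' → gapsFrom n a l = gapsFrom n a l' → l = l' := by
  induction l with
  | nil =>
    intro a l' _ _ h
    have := congrArg List.length h
    simp only [gapsFrom_length, List.length_nil] at this
    exact (List.length_eq_zero_iff.1 (by omega)).symm
  | cons x l ih =>
    intro a l' h1 h2 h
    cases l' with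
    | nil =>
      have := congrArg List.length h
      simp [gapsFrom_length] at this
    | cons y l' =>
      simp only [okL] at h1 h2
      rw [gapsFrom_cons, gapsFrom_cons] at h
      have e1 := (List.cons.inj h).1
      have e2 := (List.cons.inj h).2
      have : x = y := by omega
      subst this
      rw [ih _ _ h1.2 h2.2 e2]

lemma okL_of (n : ℕ) (l : List ℕ) :
    ∀ a, a ≤ n → l.Pairwise (· < ·) → (∀ x ∈ l, a ≤ x ∧ x < n) → okL n a l := by
  induction l with
  | nil => intro a h _ _; exact h
  | cons x l ih =>
    intro a h hp hx
    rw [List.pairwise_cons] at hp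
    refine ⟨(hx x (by simp)).1, ih _ (hx x (by simp)).2 hp.2 fun y hy => ⟨hp.1 y hy, (hx y (by simp [hy])).2⟩⟩

lemma okL_mem (n : ℕ) (l : List ℕ) : ∀ a, okL n a l → ∀ x ∈ l, a ≤ x := by
  induction l with
  | nil => intro a _ x hx; simp at hx
  | cons y l ih =>
    intro a h x hx
    simp only [okL] at h
    rcases List.mem_cons.1 hx with rfl | hx
    · exact h.1
    · have := ih _ h.2 x hx; omega

lemma gapsFrom_no_one (n : ℕ) (Vp : ℕ → Prop) (hn : Vp n) (l : List ℕ) :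
    ∀ a, okL n a l → Vp a → (∀ x ∈ l, Vp x ∧ Vp (x + 1)) →
      (∀ x, a ≤ x → x < n → Vp x → Vp (x + 1) → x ∈ l) → 1 ∉ gapsFrom n a l := by
  induction l with
  | nil =>
    intro a h ha _ hx
    simp only [gapsFrom_nil, List.mem_singleton]
    intro h1
    have : a + 1 = n := by omega
    have := hx a le_rfl (by omega) ha (by rwa [this])
    simp at this
  | cons y l ih =>
    intro a h ha hl hx
    simp only [okL] at h
    rw [gapsFrom_cons, List.mem_cons, not_or]
    have hy := hl y (by simp)
    have hm := okL_mem n l _ h.2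
    constructor
    · intro h1
      have e : a + 1 = y := by omega
      have hs := gapsFrom_sum n l _ h.2
      have := hx a le_rfl (by omega) ha (by rw [e]; exact hy.1)
      rcases List.mem_cons.1 this with h2 | h2
      · omega
      · have := hm a h2; omega
    · refine ih _ h.2 hy.2 (fun x hx => hl x (by simp [hx])) fun x h1 h2 h3 h4 => ?_
      have := hx x (by omega) h2 h3 h4
      rcases List.mem_cons.1 this with h2 | h2
      · omega
      · exact h2

lemma starts_le (n : ℕ) (N : ℕ → ℕ) (hN : ∀ b, N b ≤ n - b) (l : List ℕ) :
    ∀ a, okL n a l → (∀ b, ∀ x ∈ l, b ≤ x → N b ≤ x - b) →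
      ((a :: l.map (· + 1)).map fun b => (N b).factorial).prod ≤
        ((gapsFrom n a l).map Nat.factorial).prod := by
  induction l with
  | nil =>
    intro a _ _
    simp only [gapsFrom_nil, List.map_cons, List.map_nil, List.prod_cons, List.prod_nil, mul_one]
    exact Nat.factorial_le (hN a)
  | cons x l ih =>
    intro a h hl
    simp only [okL] at h
    have := ih (x + 1) h.2 (fun b y hy => hl b y (by simp [hy]))
    rw [gapsFrom_cons, List.map_cons, List.prod_cons, List.map_cons (f := Nat.factorial), List.prod_cons]
    exact Nat.mul_le_mul (Nat.factorial_le (hl a x (by simp) h.1)) this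

/-- finite sets of gap lists -/
def GLst : ℕ → ℕ → ℕ → Finset (List ℕ)
  | 0, M, g => if M = 0 ∧ g = 0 then {[]} else ∅
  | k + 1, M, g => (GLst k M g).image (List.cons 0) ∪
      (if g = 0 then ∅ else (Finset.Icc 2 M).biUnion fun m => (GLst k (M - m) (g - 1)).image (List.cons m))

lemma mem_GLst (L : List ℕ) : ∀ k M g, L.length = k → L.sum = M → (L.filter (· != 0)).length = g →
    1 ∉ L → L ∈ GLst k M g := by
  induction L with
  | nil => rintro k M g rfl rfl rfl _; simp [GLst]
  | cons x L ih =>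
    rintro k M g rfl rfl rfl h1
    simp only [List.mem_cons, not_or] at h1
    rw [List.length_cons, GLst, Finset.mem_union]
    by_cases hx : x = 0
    · left
      subst hx
      rw [Finset.mem_image]
      exact ⟨L, ih _ _ _ rfl (by simp) (by simp) h1.2, rfl⟩
    · right
      have hf : ((x :: L).filter (· != 0)).length = (L.filter (· != 0)).length + 1 := by
        rw [List.filter_cons_of_pos (by simpa using hx)]; simp
      rw [hf, if_neg (by omega), Finset.mem_biUnion]
      refine ⟨x, by simp; omega, Finset.mem_image.2 ⟨L, ih _ _ _ rfl (by simp) (by simp) h1.2, rfl⟩⟩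

def Zw (k M g : ℕ) : ℕ := ∑ L ∈ GLst k M g, (L.map Nat.factorial).prod

def Bd (M : ℕ) : ℕ → ℕ
  | 0 => if M = 0 then 1 else 0
  | g + 1 => if 2 * (g + 1) ≤ M then 4 ^ g * (M - g).factorial else 0

lemma fac2 (b : ℕ) : ∀ a, (a + 2).factorial * (b + 2).factorial ≤ 2 * (a + b + 2).factorial := by
  intro a
  induction a with
  | zero => simp
  | succ a ih =>
    have e1 : (a + 1 + 2).factorial = (a + 3) * (a + 2).factorial := Nat.factorial_succ _
    have e2 : (a + 1 + b + 2).factorial = (a + b + 3) * (a + b + 2).factorial := by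
      rw [show a + 1 + b + 2 = (a + b + 2) + 1 by ring, Nat.factorial_succ]
    rw [e1, e2]
    nlinarith [Nat.mul_le_mul_left (a + 3) ih, Nat.zero_le (b * (a + b + 2).factorial)]

lemma facsum (K : ℕ) : ∑ m ∈ Finset.Icc 1 (K + 1), m.factorial * (K + 2 - m).factorial
    ≤ 4 * (K + 1).factorial := by
  have hsub : Finset.Icc 1 (K + 1) ⊆ ({1, K + 1} : Finset ℕ) ∪ Finset.Icc 2 K := by
    intro x hx
    simp only [Finset.mem_Icc, Finset.mem_union, Finset.mem_insert, Finset.mem_singleton] at hx ⊢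
    omega
  refine (Finset.sum_le_sum_of_subset hsub).trans ?_
  have h1 : ∀ m ∈ ({1, K + 1} : Finset ℕ), m.factorial * (K + 2 - m).factorial ≤ (K + 1).factorial := by
    intro m hm
    simp only [Finset.mem_insert, Finset.mem_singleton] at hm
    rcases hm with rfl | rfl
    · simp
    · rw [show K + 2 - (K + 1) = 1 by omega]; simp
  have h2 : ∀ m ∈ Finset.Icc 2 K, m.factorial * (K + 2 - m).factorial ≤ 2 * K.factorial := by
    intro m hm
    simp only [Finset.mem_Icc] at hm
    have := fac2 (K - m) (m - 2)
    rw [show m - 2 + 2 = m by omega, show K - m + 2 = K + 2 - m by omega,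
      show m - 2 + (K - m) + 2 = K by omega] at this
    exact this
  have s1 := Finset.sum_le_card_nsmul _ _ _ h1
  have s2 := Finset.sum_le_card_nsmul _ _ _ h2
  have c1 : ({1, K + 1} : Finset ℕ).card ≤ 2 := Finset.card_le_two
  have c2 : (Finset.Icc 2 K).card ≤ K + 1 := by simp; omega
  have h3 := Finset.sum_union_inter (s₁ := ({1, K + 1} : Finset ℕ)) (s₂ := Finset.Icc 2 K)
    (f := fun m => m.factorial * (K + 2 - m).factorial)
  simp only [smul_eq_mul] at s1 s2
  have t1 := Nat.mul_le_mul_right (K + 1).factorial c1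
  have t2 := Nat.mul_le_mul_right (2 * K.factorial) c2
  have e : (K + 1).factorial = (K + 1) * K.factorial := Nat.factorial_succ K
  have : (K + 1) * (2 * K.factorial) = 2 * (K + 1).factorial := by rw [e]; ring
  omega

lemma Bd_rec (M g : ℕ) : ∑ m ∈ Finset.Icc 2 M, m.factorial * Bd (M - m) g ≤ Bd M (g + 1) := by
  cases g with
  | zero =>
    by_cases hM : 2 ≤ M
    · have : ∀ m ∈ Finset.Icc 2 M, m ≠ M → m.factorial * Bd (M - m) 0 = 0 := by
        intro m hm hne
        simp only [Finset.mem_Icc] at hm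
        simp only [Bd]
        rw [if_neg (by omega)]; simp
      rw [Finset.sum_eq_single M this (by simp; omega)]
      simp [Bd, hM]
    · rw [Finset.Icc_eq_empty (by omega)]; simp
  | succ h =>
    by_cases hM : 2 * (h + 2) ≤ M
    · have e : Bd M (h + 1 + 1) = 4 ^ (h + 1) * (M - (h + 1)).factorial := by
        simp only [Bd]; rw [if_pos hM]
      rw [e]
      obtain ⟨K, hK⟩ : ∃ K, M = K + 2 + h := ⟨M - 2 - h, by omega⟩
      have := facsum K
      calc ∑ m ∈ Finset.Icc 2 M, m.factorial * Bd (M - m) (h + 1)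
          ≤ ∑ m ∈ Finset.Icc 1 (K + 1), 4 ^ h * (m.factorial * (K + 2 - m).factorial) := by
            rw [← Finset.sum_filter_of_ne (p := fun m => 2 * (h + 1) ≤ M - m)]
            · refine (Finset.sum_le_sum (g := fun m => 4 ^ h * (m.factorial * (K + 2 - m).factorial)) ?_).trans
                (Finset.sum_le_sum_of_subset ?_)
              · intro m hm
                simp only [Finset.mem_filter, Finset.mem_Icc] at hm
                simp only [Bd]
                rw [if_pos hm.2, show M - m - h = K + 2 - m by omega]
                exact le_of_eq (by ring)
              · intro m hm
                simp only [Finset.mem_filter, Finset.mem_Icc] at hm ⊢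
                omega
            · intro m _ hne
              by_contra hc
              apply hne
              simp only [Bd]
              rw [if_neg hc]; simp
        _ = 4 ^ h * ∑ m ∈ Finset.Icc 1 (K + 1), (m.factorial * (K + 2 - m).factorial) := by
            rw [Finset.mul_sum]
        _ ≤ 4 ^ h * (4 * (K + 1).factorial) := Nat.mul_le_mul_left _ this
        _ = _ := by rw [show M - (h + 1) = K + 1 by omega]; ring
    · rw [Finset.sum_eq_zero]
      · simp
      · intro m hm
        simp only [Finset.mem_Icc] at hm
        simp only [Bd]
        rw [if_neg (by omega)]; simp

lemma Zw_le : ∀ k M g, Zw k M g ≤ k.choose g * Bd M g := by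
  intro k
  induction k with
  | zero =>
    intro M g
    unfold Zw
    rw [GLst]
    split_ifs with h
    · obtain ⟨rfl, rfl⟩ := h; simp [Bd]
    · simp
  | succ k ih =>
    intro M g
    have himg : ∀ (T : Finset (List ℕ)) m, ∑ L ∈ T.image (List.cons m), (L.map Nat.factorial).prod
        = m.factorial * ∑ L ∈ T, (L.map Nat.factorial).prod := by
      intro T m
      rw [Finset.sum_image (fun a _ b _ h => (List.cons.inj h).2), Finset.mul_sum]
      simp
    have hun : ∀ A B : Finset (List ℕ), ∑ L ∈ A ∪ B, (L.map Nat.factorial).prod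
        ≤ ∑ L ∈ A, (L.map Nat.factorial).prod + ∑ L ∈ B, (L.map Nat.factorial).prod := by
      intro A B
      rw [← Finset.sum_union_inter]; omega
    unfold Zw
    rw [GLst]
    refine (hun _ _).trans ?_
    rw [himg]
    have h0 := ih M g
    unfold Zw at h0
    cases g with
    | zero => simpa using h0
    | succ g =>
      rw [if_neg (by omega)]
      have hd : ∑ L ∈ (Finset.Icc 2 M).biUnion fun m => (GLst k (M - m) (g + 1 - 1)).image (List.cons m),
          (L.map Nat.factorial).prod ≤ k.choose g * Bd M (g + 1) := by
        rw [Finset.sum_biUnion]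
        · calc ∑ m ∈ Finset.Icc 2 M, ∑ L ∈ (GLst k (M - m) (g + 1 - 1)).image (List.cons m), (L.map Nat.factorial).prod
              = ∑ m ∈ Finset.Icc 2 M, m.factorial * Zw k (M - m) g := by
                refine Finset.sum_congr rfl fun m _ => ?_
                rw [himg]; rfl
            _ ≤ ∑ m ∈ Finset.Icc 2 M, k.choose g * (m.factorial * Bd (M - m) g) := by
                refine Finset.sum_le_sum fun m _ => ?_
                have := Nat.mul_le_mul_left m.factorial (ih (M - m) g)
                refine this.trans (le_of_eq (by ring))
            _ = k.choose g * ∑ m ∈ Finset.Icc 2 M, (m.factorial * Bd (M - m) g) := by rw [Finset.mul_sum]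
            _ ≤ _ := Nat.mul_le_mul_left _ (Bd_rec M g)
        · intro a _ b _ hab
          rw [Function.onFun, Finset.disjoint_left]
          intro x hx hx'
          obtain ⟨y, _, rfl⟩ := Finset.mem_image.1 hx
          obtain ⟨z, _, e⟩ := Finset.mem_image.1 hx'
          exact hab (List.cons.inj e).1.symm
      rw [Nat.choose_succ_succ]
      simp only [Nat.factorial_zero, one_mul]
      nlinarith
end RandomHypercube


namespace RandomHypercube

def sl (n : ℕ) (S : Finset (Fin n)) : List ℕ := (S.sort (· ≤ ·)).map Fin.val

lemma mem_sl (n : ℕ) (S : Finset (Fin n)) (x : ℕ) : x ∈ sl n S ↔ ∃ h : x < n, (⟨x, h⟩ : Fin n) ∈ S := by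
  simp only [sl, List.mem_map, Finset.mem_sort]
  constructor
  · rintro ⟨a, ha, rfl⟩; exact ⟨a.2, ha⟩
  · rintro ⟨h, hx⟩; exact ⟨_, hx, rfl⟩

lemma sl_pairwise (n : ℕ) (S : Finset (Fin n)) : (sl n S).Pairwise (· < ·) := by
  rw [sl, List.pairwise_map]
  exact (Finset.sortedLT_sort S).pairwise

lemma sl_ok (n : ℕ) (S : Finset (Fin n)) : okL n 0 (sl n S) := by
  refine okL_of n _ 0 (Nat.zero_le _) (sl_pairwise n S) fun x hx => ⟨Nat.zero_le _, ?_⟩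
  exact ((mem_sl n S x).1 hx).1

lemma sl_length (n : ℕ) (S : Finset (Fin n)) : (sl n S).length = S.card := by simp [sl]

lemma sl_inj (n : ℕ) (S S' : Finset (Fin n)) (h : sl n S = sl n S') : S = S' := by
  ext x
  have h1 := mem_sl n S x
  have h2 := mem_sl n S' x
  rw [h] at h1
  constructor
  · intro hx; exact (h2.1 (h1.2 ⟨x.2, hx⟩)).2
  · intro hx; exact (h1.1 (h2.2 ⟨x.2, hx⟩)).2

lemma gapVector_eq (n : ℕ) (σ σ' : Equiv.Perm (Fin n)) :
    gapVector n σ σ' = gapsFrom n 0 (sl n (sharedSteps n σ σ')) := rfl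

def sg (n : ℕ) (σ : Equiv.Perm (Fin n)) (b : ℕ) : Finset (Fin n) :=
  (Finset.univ.filter fun i : Fin n => i.val < b).image σ

lemma sg_succ (n : ℕ) (σ : Equiv.Perm (Fin n)) (b : Fin n) :
    sg n σ (b + 1) = insert (σ b) (sg n σ b) := by
  rw [sg, sg, ← Finset.image_insert]
  congr 1
  ext i
  simp only [Finset.mem_filter, Finset.mem_univ, true_and, Finset.mem_insert, Fin.ext_iff]
  omega

lemma sg_not_mem (n : ℕ) (σ : Equiv.Perm (Fin n)) (b : Fin n) : σ b ∉ sg n σ b := by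
  simp [sg]

lemma shared_iff (n : ℕ) (σ σ' : Equiv.Perm (Fin n)) (b : Fin n) :
    b ∈ sharedSteps n σ σ' ↔ sg n σ b = sg n σ' b ∧ sg n σ (b + 1) = sg n σ' (b + 1) := by
  have e : ∀ τ : Equiv.Perm (Fin n), initSeg n τ b = sg n τ b := fun τ => rfl
  simp only [sharedSteps, pathEdge, Finset.mem_filter, Finset.mem_univ, true_and, Prod.mk.injEq, e]
  refine and_congr_right fun h => ?_
  rw [sg_succ, sg_succ, h]
  constructor
  · intro h; rw [h]
  · intro h2
    have h3 : σ b ∈ insert (σ' b) (sg n σ' b) := by rw [← h2]; simp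
    rcases Finset.mem_insert.1 h3 with h4 | h4
    · exact h4
    · rw [← h] at h4; exact absurd h4 (sg_not_mem n σ b)

lemma gv_no_one (n : ℕ) (σ σ' : Equiv.Perm (Fin n)) : 1 ∉ gapVector n σ σ' := by
  rw [gapVector_eq]
  apply gapsFrom_no_one n (fun b => sg n σ b = sg n σ' b)
  · have : ∀ τ : Equiv.Perm (Fin n), sg n τ n = Finset.univ := by
      intro τ
      ext x
      simp only [sg, Finset.mem_image, Finset.mem_filter, Finset.mem_univ, true_and, iff_true]
      exact ⟨τ.symm x, (τ.symm x).2, by simp⟩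
    rw [this, this]
  · exact sl_ok n _
  · simp [sg]
  · intro x hx
    obtain ⟨h, hx⟩ := (mem_sl _ _ _).1 hx
    exact (shared_iff n σ σ' ⟨x, h⟩).1 hx
  · intro x _ h h1 h2
    exact (mem_sl _ _ _).2 ⟨h, (shared_iff n σ σ' ⟨x, h⟩).2 ⟨h1, h2⟩⟩

lemma gv_mem (n s g : ℕ) (σ σ' : Equiv.Perm (Fin n)) (hs : (sharedSteps n σ σ').card = s)
    (hg : numGaps n σ σ' = g) : gapVector n σ σ' ∈ GLst (s + 1) (n - s) g := by
  apply mem_GLst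
  · rw [gapVector_eq, gapsFrom_length, sl_length, hs]
  · have := gapsFrom_sum n _ 0 (sl_ok n (sharedSteps n σ σ'))
    rw [sl_length, hs] at this
    rw [gapVector_eq]; omega
  · exact hg
  · exact gv_no_one n σ σ'

def stt (n : ℕ) (S : Finset (Fin n)) (j : Fin n) : ℕ := (S.filter (· < j)).sup fun x => x.val + 1

lemma stt_le (n : ℕ) (S : Finset (Fin n)) (j : Fin n) : stt n S j ≤ j := by
  apply Finset.sup_le
  intro x hx
  have := (Finset.mem_filter.1 hx).2
  exact this

lemma le_stt (n : ℕ) (S : Finset (Fin n)) (j x : Fin n) (hx : x ∈ S) (h : x < j) :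
    x.val + 1 ≤ stt n S j :=
  Finset.le_sup (f := fun x : Fin n => x.val + 1) (Finset.mem_filter.2 ⟨hx, h⟩)

lemma stt_mem (n : ℕ) (S : Finset (Fin n)) (j : Fin n) :
    stt n S j ∈ (0 :: (sl n S).map (· + 1)) := by
  by_cases h : (S.filter (· < j)).Nonempty
  · obtain ⟨x, hx, e⟩ := Finset.exists_mem_eq_sup _ h (fun x : Fin n => x.val + 1)
    rw [stt, e]
    apply List.mem_cons_of_mem
    rw [List.mem_map]
    exact ⟨x, (mem_sl _ _ _).2 ⟨x.2, (Finset.mem_filter.1 hx).1⟩, rfl⟩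
  · rw [Finset.not_nonempty_iff_eq_empty] at h
    rw [stt, h]
    simp

lemma fiber_le (n : ℕ) (σ : Equiv.Perm (Fin n)) (S : Finset (Fin n)) :
    (Finset.univ.filter fun σ' => sharedSteps n σ σ' = S).card ≤
      ((gapsFrom n 0 (sl n S)).map Nat.factorial).prod := by
  classical
  let f : Fin n → Fin (n + 1) ⊕ Fin n := fun j => if j ∈ S then Sum.inr j else
    Sum.inl ⟨stt n S j, by have := stt_le n S j; omega⟩
  let N : ℕ → ℕ := fun b => (Finset.univ.filter fun j => j ∉ S ∧ stt n S j = b).card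
  have step1 : (Finset.univ.filter fun σ' => sharedSteps n σ σ' = S).card ≤
      Fintype.card {g : Equiv.Perm (Fin n) // f ∘ g = f} := by
    rw [Fintype.card_subtype]
    apply Finset.card_le_card_of_injOn (fun σ' => σ⁻¹ * σ')
    · intro σ' h
      simp only [Finset.mem_coe, Finset.mem_filter, Finset.mem_univ, true_and] at h ⊢
      set τ := σ⁻¹ * σ' with hτ
      have hσ' : ∀ j, σ (τ j) = σ' j := by intro j; simp [hτ]
      have hfix : ∀ x ∈ S, τ x = x := by
        intro x hx
        rw [← h] at hx
        simp only [sharedSteps, pathEdge, Finset.mem_filter, Prod.mk.injEq] at hx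
        apply σ.injective
        rw [hσ', hx.2.2]
      have hlt : ∀ x ∈ S, ∀ j, τ j < x ↔ j < x := by
        intro x hx j
        rw [← h] at hx
        have hx := ((shared_iff _ _ _ _).1 hx).1
        have h1 := congrArg (fun T => σ' j ∈ T) hx
        simp only [sg, Finset.mem_image, Finset.mem_filter, Finset.mem_univ, true_and, eq_iff_iff,
          EmbeddingLike.apply_eq_iff_eq, exists_eq_right] at h1
        rw [← hσ' j] at h1
        simpa using h1
      have hmem : ∀ j, τ j ∈ S ↔ j ∈ S := by
        intro j
        constructor
        · intro hj
          have := hfix _ hj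
          rw [← τ.injective this]; exact hj
        · intro hj; rw [hfix _ hj]; exact hj
      funext j
      simp only [Function.comp, f]
      by_cases hj : j ∈ S
      · rw [hfix j hj]
      · rw [if_neg hj, if_neg (by rwa [hmem])]
        congr 2
        have hle : ∀ x ∈ S, x < τ j ↔ x < j := by
          intro x hx
          have h1 := hlt x hx j
          have h2 : τ j ≠ x := by intro e; rw [← e, hmem] at hx; exact hj hx
          have h3 : j ≠ x := by intro e; rw [← e] at hx; exact hj hx
          constructor
          · intro h4; exact lt_of_le_of_ne (not_lt.1 fun h5 => absurd (h1.2 h5) h4.asymm) h3.symm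
          · intro h4; exact lt_of_le_of_ne (not_lt.1 fun h5 => absurd (h1.1 h5) h4.asymm) h2.symm
        unfold stt
        rw [Finset.filter_congr hle]
    · intro a _ b _ h
      exact mul_left_cancel h
  refine step1.trans ?_
  rw [DomMulAct.stabilizer_card, Fintype.prod_sum_type]
  have h2 : ∏ j : Fin n, (Fintype.card {a // f a = Sum.inr j}).factorial = 1 := by
    apply Finset.prod_eq_one
    intro j _
    have : Fintype.card {a // f a = Sum.inr j} ≤ 1 := by
      rw [Fintype.card_le_one_iff]
      have key : ∀ a, f a = Sum.inr j → a = j := by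
        intro a ha
        simp only [f] at ha
        split_ifs at ha with h
        exact Sum.inr.inj ha
      rintro ⟨a, ha⟩ ⟨b, hb⟩
      rw [Subtype.mk.injEq, key a ha, key b hb]
    exact Nat.factorial_eq_one.2 this
  have h1 : ∏ b : Fin (n + 1), (Fintype.card {a // f a = Sum.inl b}).factorial =
      ∏ b ∈ Finset.range (n + 1), (N b).factorial := by
    rw [Finset.prod_range]
    refine Finset.prod_congr rfl fun b _ => ?_
    congr 1
    rw [Fintype.card_subtype]
    simp only [N]
    congr 1
    ext j
    simp only [Finset.mem_filter, Finset.mem_univ, true_and, f]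
    split_ifs with h
    · simp [h]
    · simp [h, Fin.ext_iff]
  rw [h1, h2, mul_one]
  have hsub : (0 :: (sl n S).map (· + 1)).toFinset ⊆ Finset.range (n + 1) := by
    intro x hx
    rw [List.mem_toFinset, List.mem_cons, List.mem_map] at hx
    rw [Finset.mem_range]
    rcases hx with rfl | ⟨y, hy, rfl⟩
    · omega
    · obtain ⟨h, _⟩ := (mem_sl _ _ _).1 hy; omega
  rw [← Finset.prod_subset hsub]
  · rw [List.prod_toFinset]
    · apply starts_le n N _ _ 0 (sl_ok n S)
      · intro b x hx hb
        obtain ⟨hxn, hxS⟩ := (mem_sl _ _ _).1 hx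
        have : N b ≤ (Finset.Ico b x).card := by
          apply Finset.card_le_card_of_injOn Fin.val
          · intro j hj
            simp only [Finset.mem_coe, Finset.mem_filter, Finset.mem_univ, true_and, Finset.mem_Ico] at hj ⊢
            have h1 := stt_le n S j
            refine ⟨by omega, ?_⟩
            by_contra hc
            rcases (not_lt.1 hc).lt_or_eq with h | h
            · have := le_stt n S j ⟨x, hxn⟩ hxS (by simpa [Fin.lt_def] using h)
              simp at this; omega
            · exact hj.1 (by convert hxS; exact h.symm)
          · intro a _ b _ h; exact Fin.ext h
        simpa using this
      · intro b
        have : N b ≤ (Finset.Ico b n).card := by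
          apply Finset.card_le_card_of_injOn Fin.val
          · intro j hj
            simp only [Finset.mem_coe, Finset.mem_filter, Finset.mem_univ, true_and, Finset.mem_Ico] at hj ⊢
            have h1 := stt_le n S j
            omega
          · intro a _ b _ h; exact Fin.ext h
        simpa using this
    · rw [List.nodup_cons]
      constructor
      · simp
      · apply List.Nodup.map (fun a b h => by simpa using h)
        exact (sl_pairwise n S).imp (fun h => ne_of_lt h)
  · intro b _ hb
    rw [Nat.factorial_eq_one]
    have : N b = 0 := by
      rw [Finset.card_eq_zero, Finset.filter_eq_empty_iff]
      rintro j _ ⟨_, rfl⟩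
      exact hb (List.mem_toFinset.2 (stt_mem n S j))
    omega

lemma count_le (n s g : ℕ) (σ : Equiv.Perm (Fin n)) :
    (Finset.univ.filter fun σ' => (sharedSteps n σ σ').card = s ∧ numGaps n σ σ' = g).card ≤
      Zw (s + 1) (n - s) g := by
  classical
  rw [Finset.card_eq_sum_card_fiberwise (f := fun σ' => gapVector n σ σ') (t := GLst (s + 1) (n - s) g)]
  · unfold Zw
    refine Finset.sum_le_sum fun L _ => ?_
    by_cases hne : ∃ σ₀, gapVector n σ σ₀ = L
    · obtain ⟨σ₀, rfl⟩ := hne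
      refine le_trans (Finset.card_le_card ?_) (fiber_le n σ (sharedSteps n σ σ₀))
      intro σ' h
      simp only [Finset.mem_filter, Finset.mem_univ, true_and] at h ⊢
      apply sl_inj
      exact gapsFrom_inj n _ 0 _ (sl_ok _ _) (sl_ok _ _) h.2
    · rw [Finset.filter_eq_empty_iff.2]
      · simp
      · intro σ' _ h; exact hne ⟨σ', h⟩
  · intro σ' h
    simp only [Finset.mem_coe, Finset.mem_filter, Finset.mem_univ, true_and] at h ⊢
    exact gv_mem n s g σ σ' h.1 h.2
end RandomHypercube


namespace RandomHypercube

lemma initSeg_card (n : ℕ) (σ : Equiv.Perm (Fin n)) (j : Fin n) : (initSeg n σ j).card = j := by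
  rw [initSeg, Finset.card_image_of_injective _ σ.injective]
  have : (Finset.univ.filter fun i : Fin n => i < j) = Finset.Iio j := by ext; simp
  rw [this, Fin.card_Iio]

lemma pathEdge_lvl (n : ℕ) (σ σ' : Equiv.Perm (Fin n)) (i j : Fin n)
    (h : pathEdge n σ i = pathEdge n σ' j) : i = j := by
  have := congrArg (fun e => e.1.card) h
  simp only [pathEdge, initSeg_card] at this
  exact Fin.ext this

lemma pairProb_le (n s : ℕ) (σ σ' : Equiv.Perm (Fin n)) (hs : (sharedSteps n σ σ').card = s) :
    pairProb n σ σ' ≤ ((2 * (n - s)).choose (n - s) : ℝ) / ((n + (n - s)).factorial : ℝ) := by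
  have hpos : (0 : ℝ) < ((n + (n - s)).factorial : ℝ) := by exact_mod_cast Nat.factorial_pos _
  rw [le_div_iff₀ hpos]
  haveI : IsProbabilityMeasure ((volume : Measure ℝ).restrict (Set.Icc 0 1)) := ⟨by simp⟩
  refine probBound ((volume : Measure ℝ).restrict (Set.Icc 0 1)) n (n - s) (pathEdge n σ) (pathEdge n σ')
    (pathEdge_lvl n σ σ') (fun i j h => pathEdge_lvl n σ σ i j h)
    (fun i j h => pathEdge_lvl n σ' σ' i j h) ?_
  have := Finset.card_filter_add_card_filter_not (s := (Finset.univ : Finset (Fin n)))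
    (fun i => pathEdge n σ i = pathEdge n σ' i)
  simp only [sharedSteps] at hs
  rw [hs, Finset.card_univ, Fintype.card_fin] at this
  simp only [ne_eq]
  omega

lemma c_nonneg (n s g : ℕ) : 0 ≤ c n s g :=
  Finset.sum_nonneg fun _ _ => ENNReal.toReal_nonneg

lemma c_le (n s g : ℕ) : c n s g ≤ (n.factorial : ℝ) * (Zw (s + 1) (n - s) g : ℝ) *
    (((2 * (n - s)).choose (n - s) : ℝ) / ((n + (n - s)).factorial : ℝ)) := by
  classical
  set Q := (((2 * (n - s)).choose (n - s) : ℝ) / ((n + (n - s)).factorial : ℝ)) with hQ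
  have hQ0 : 0 ≤ Q := by positivity
  have h1 : c n s g ≤ ∑ p ∈ Finset.univ.filter
      (fun p : Equiv.Perm (Fin n) × Equiv.Perm (Fin n) =>
        (sharedSteps n p.1 p.2).card = s ∧ numGaps n p.1 p.2 = g), Q := by
    refine Finset.sum_le_sum fun p hp => ?_
    exact pairProb_le n s p.1 p.2 (Finset.mem_filter.1 hp).2.1
  rw [Finset.sum_const, nsmul_eq_mul] at h1
  refine h1.trans (mul_le_mul_of_nonneg_right ?_ hQ0)
  have h2 : (Finset.univ.filter
      (fun p : Equiv.Perm (Fin n) × Equiv.Perm (Fin n) =>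
        (sharedSteps n p.1 p.2).card = s ∧ numGaps n p.1 p.2 = g)).card
      ≤ n.factorial * Zw (s + 1) (n - s) g := by
    rw [Finset.card_filter, Fintype.sum_prod_type]
    calc _ ≤ ∑ σ : Equiv.Perm (Fin n), Zw (s + 1) (n - s) g := by
          refine Finset.sum_le_sum fun σ _ => ?_
          have := count_le n s g σ
          rwa [Finset.card_filter] at this
      _ = _ := by simp [Fintype.card_perm]
  exact_mod_cast h2

lemma Bd_le (M h : ℕ) (hM : 0 < M) : (Bd M (h + 1) : ℝ) ≤ (8 / M : ℝ) ^ h * (M.factorial : ℝ) := by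
  simp only [Bd]
  split_ifs with hc
  · have h1 : (M - h).factorial * M.descFactorial h = M.factorial := Nat.factorial_mul_descFactorial (by omega)
    have h2 := Nat.pow_sub_le_descFactorial M h
    have h3 : M ^ h ≤ 2 ^ h * M.descFactorial h := by
      calc M ^ h ≤ (2 * (M + 1 - h)) ^ h := Nat.pow_le_pow_left (by omega) _
        _ = 2 ^ h * (M + 1 - h) ^ h := by rw [mul_pow]
        _ ≤ _ := Nat.mul_le_mul_left _ h2
    have h4 : 4 ^ h * (M - h).factorial * M ^ h ≤ 8 ^ h * M.factorial := by
      calc 4 ^ h * (M - h).factorial * M ^ h ≤ 4 ^ h * (M - h).factorial * (2 ^ h * M.descFactorial h) :=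
            Nat.mul_le_mul_left _ h3
        _ = (4 ^ h * 2 ^ h) * ((M - h).factorial * M.descFactorial h) := by ring
        _ = _ := by rw [h1, ← mul_pow]; norm_num
    have hp : (0 : ℝ) < (M : ℝ) ^ h := by positivity
    rw [div_pow, div_mul_eq_mul_div, le_div_iff₀ hp]
    exact_mod_cast h4
  · simp only [Nat.cast_zero]; positivity

lemma ratio (M : ℕ) : ∀ t, t ≤ 99 * M →
    (M + t).factorial * (2 * M).factorial * 101 ^ t ≤ 100 ^ t * (M.factorial * (2 * M + t).factorial) := by
  intro t
  induction t with
  | zero => intro _; simp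
  | succ t ih =>
    intro ht
    have h := ih (by omega)
    have e1 : (M + (t + 1)).factorial = (M + t + 1) * (M + t).factorial := Nat.factorial_succ _
    have e2 : (2 * M + (t + 1)).factorial = (2 * M + t + 1) * (2 * M + t).factorial := Nat.factorial_succ _
    rw [e1, e2]
    calc (M + t + 1) * (M + t).factorial * (2 * M).factorial * 101 ^ (t + 1)
        = ((M + t + 1) * 101) * ((M + t).factorial * (2 * M).factorial * 101 ^ t) := by ring
      _ ≤ ((2 * M + t + 1) * 100) * (100 ^ t * (M.factorial * (2 * M + t).factorial)) :=
          Nat.mul_le_mul (by omega) h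
      _ = _ := by ring

lemma ratio' (n s : ℕ) (h : s ≤ 99 * n / 100) :
    (n.factorial : ℝ) * ((n - s).factorial : ℝ) *
      (((2 * (n - s)).choose (n - s) : ℝ) / ((n + (n - s)).factorial : ℝ)) ≤ (100 / 101 : ℝ) ^ s := by
  obtain ⟨M, hM⟩ : ∃ M, n = M + s := ⟨n - s, by omega⟩
  have hr := ratio M s (by omega)
  have e : n - s = M := by omega
  rw [e]
  have hc : (2 * M).choose M * M.factorial * M.factorial = (2 * M).factorial := by
    have := Nat.choose_mul_factorial_mul_factorial (show M ≤ 2 * M by omega)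
    rwa [show 2 * M - M = M by omega] at this
  have e3 : n + M = 2 * M + s := by omega
  rw [e3, hM]
  have p1 : (0 : ℝ) < ((2 * M + s).factorial : ℝ) := by exact_mod_cast Nat.factorial_pos _
  have p2 : (0 : ℝ) < (M.factorial : ℝ) := by exact_mod_cast Nat.factorial_pos _
  rw [div_pow, ← mul_div_assoc, div_le_div_iff₀ p1 (by positivity)]
  rw [← hc] at hr
  have hr' : ((M + s).factorial : ℝ) * (((2 * M).choose M : ℝ) * M.factorial * M.factorial) * 101 ^ s ≤
      100 ^ s * (M.factorial * (2 * M + s).factorial) := by exact_mod_cast hr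
  refine le_of_mul_le_mul_right ?_ p2
  linarith

lemma c_bound (n s h : ℕ) (hn : 0 < n) (hs : s ≤ 99 * n / 100) :
    c n s (h + 1) ≤ ((s + 1).choose (h + 1) : ℝ) * (800 / n : ℝ) ^ h * (100 / 101 : ℝ) ^ s := by
  have hM : 0 < n - s := by omega
  set M := n - s with hMd
  have hnM : (n : ℝ) ≤ 100 * (M : ℝ) := by
    have : n ≤ 100 * M := by omega
    exact_mod_cast this
  have hM' : (0 : ℝ) < M := by exact_mod_cast hM
  have hn' : (0 : ℝ) < n := by exact_mod_cast hn
  have h8 : (8 / M : ℝ) ≤ 800 / n := by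
    rw [div_le_div_iff₀ hM' hn']; linarith
  have hz : (Zw (s + 1) M (h + 1) : ℝ) ≤ ((s + 1).choose (h + 1) : ℝ) * ((800 / n : ℝ) ^ h * (M.factorial : ℝ)) := by
    have h1 : (Zw (s + 1) M (h + 1) : ℝ) ≤ ((s + 1).choose (h + 1) : ℝ) * (Bd M (h + 1) : ℝ) := by
      exact_mod_cast Zw_le (s + 1) M (h + 1)
    refine h1.trans (mul_le_mul_of_nonneg_left ((Bd_le M h hM).trans ?_) (by positivity))
    gcongr
  have hr := ratio' n s hs
  rw [← hMd] at hr
  set Q := (((2 * M).choose M : ℝ) / ((n + M).factorial : ℝ)) with hQ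
  have hQ0 : 0 ≤ Q := by positivity
  calc c n s (h + 1) ≤ (n.factorial : ℝ) * (Zw (s + 1) M (h + 1) : ℝ) * Q := c_le n s (h + 1)
    _ ≤ (n.factorial : ℝ) * (((s + 1).choose (h + 1) : ℝ) * ((800 / n : ℝ) ^ h * (M.factorial : ℝ))) * Q := by
        gcongr
    _ = ((s + 1).choose (h + 1) : ℝ) * (800 / n : ℝ) ^ h * ((n.factorial : ℝ) * M.factorial * Q) := by ring
    _ ≤ _ := mul_le_mul_of_nonneg_left hr (by positivity)

lemma choose_two (k h : ℕ) : k.choose (h + 2) ≤ k ^ 2 * k.choose h := by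
  have step : ∀ j, k.choose (j + 1) ≤ k * k.choose j := by
    intro j
    have h1 := Nat.choose_succ_right_eq k j
    calc k.choose (j + 1) ≤ k.choose (j + 1) * (j + 1) := Nat.le_mul_of_pos_right _ (by omega)
      _ = k.choose j * (k - j) := h1
      _ ≤ k.choose j * k := Nat.mul_le_mul_left _ (by omega)
      _ = _ := by ring
  calc k.choose (h + 2) ≤ k * k.choose (h + 1) := step (h + 1)
    _ ≤ k * (k * k.choose h) := Nat.mul_le_mul_left _ (step h)
    _ = _ := by ring

lemma gsum (k m : ℕ) (hm : m ≤ k) (δ : ℝ) (hδ : 0 ≤ δ) :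
    ∑ g ∈ Finset.Icc 2 m, (k.choose g : ℝ) * δ ^ (g - 1) ≤ δ * (k : ℝ) ^ 2 * (1 + δ) ^ k := by
  have e : (1 + δ) ^ k = ∑ h ∈ Finset.range (k + 1), δ ^ h * (k.choose h : ℝ) := by
    rw [add_comm, add_pow]; simp
  rw [e, Finset.mul_sum]
  have hI : Finset.Icc 2 m ⊆ (Finset.range (k + 1)).image (· + 2) := by
    intro g hg
    rw [Finset.mem_Icc] at hg
    exact Finset.mem_image.2 ⟨g - 2, by simp; omega, by omega⟩
  refine (Finset.sum_le_sum_of_subset_of_nonneg hI fun _ _ _ => by positivity).trans ?_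
  rw [Finset.sum_image (fun a _ b _ h => by simpa using h)]
  refine Finset.sum_le_sum fun h _ => ?_
  have h2 : (k.choose (h + 2) : ℝ) ≤ (k : ℝ) ^ 2 * (k.choose h : ℝ) := by exact_mod_cast choose_two k h
  rw [show h + 2 - 1 = h + 1 by omega]
  calc (k.choose (h + 2) : ℝ) * δ ^ (h + 1) ≤ ((k : ℝ) ^ 2 * (k.choose h : ℝ)) * δ ^ (h + 1) := by gcongr
    _ = _ := by ring

lemma inner_bound (n s : ℕ) (hn : 800000 ≤ n) (hs : s ≤ 99 * n / 100) :
    ∑ g ∈ Finset.Icc 2 (min (s + 1) ((n - s) / 2)), c n s g ≤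
      (1600 / n : ℝ) * (((s : ℝ) + 1) ^ 2 * (1001 / 1010 : ℝ) ^ s) := by
  have hn0 : (0 : ℝ) < n := by exact_mod_cast (by omega : 0 < n)
  have hδ : (800 / n : ℝ) ≤ 1 / 1000 := by
    rw [div_le_div_iff₀ hn0 (by norm_num)]
    have : (800000 : ℝ) ≤ n := by exact_mod_cast hn
    linarith
  have hδ0 : (0 : ℝ) ≤ 800 / n := by positivity
  calc ∑ g ∈ Finset.Icc 2 (min (s + 1) ((n - s) / 2)), c n s g
      ≤ ∑ g ∈ Finset.Icc 2 (min (s + 1) ((n - s) / 2)),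
        (((s + 1).choose g : ℝ) * (800 / n : ℝ) ^ (g - 1)) * (100 / 101 : ℝ) ^ s := by
        refine Finset.sum_le_sum fun g hg => ?_
        rw [Finset.mem_Icc] at hg
        obtain ⟨h, rfl⟩ : ∃ h, g = h + 1 := ⟨g - 1, by omega⟩
        exact c_bound n s h (by omega) hs
    _ = (∑ g ∈ Finset.Icc 2 (min (s + 1) ((n - s) / 2)),
        (((s + 1).choose g : ℝ) * (800 / n : ℝ) ^ (g - 1))) * (100 / 101 : ℝ) ^ s := by
        rw [Finset.sum_mul]
    _ ≤ ((800 / n : ℝ) * ((s + 1 : ℕ) : ℝ) ^ 2 * (1 + 800 / n : ℝ) ^ (s + 1)) * (100 / 101 : ℝ) ^ s := by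
        have := gsum (s + 1) (min (s + 1) ((n - s) / 2)) (min_le_left _ _) (800 / n) hδ0
        gcongr
    _ ≤ ((800 / n : ℝ) * ((s + 1 : ℕ) : ℝ) ^ 2 * ((1001 / 1000 : ℝ) ^ s * 2)) * (100 / 101 : ℝ) ^ s := by
        have : (1 + 800 / n : ℝ) ^ (s + 1) ≤ (1001 / 1000 : ℝ) ^ s * 2 := by
          rw [pow_succ]
          have : (1 + 800 / n : ℝ) ≤ 1001 / 1000 := by linarith
          have h2 : (1 + 800 / n : ℝ) ≤ 2 := by linarith
          gcongr
        gcongr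
    _ = _ := by
        rw [show (1001 / 1010 : ℝ) = (1001 / 1000) * (100 / 101) by norm_num, mul_pow]
        push_cast
        ring

lemma summ1 : Summable fun s : ℕ => ((s : ℝ) + 1) ^ 2 * (1001 / 1010 : ℝ) ^ s := by
  have h := summable_pow_mul_geometric_of_norm_lt_one 2 (r := (1001 / 1010 : ℝ)) (by norm_num)
  have h2 := ((summable_nat_add_iff 1).2 h).mul_left (1010 / 1001 : ℝ)
  refine h2.congr fun s => ?_
  push_cast
  rw [pow_succ]
  ring

lemma summ2 : Summable fun s : ℕ => ((s : ℝ) + 1) * (100 / 101 : ℝ) ^ s := by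
  have h := summable_pow_mul_geometric_of_norm_lt_one 1 (r := (100 / 101 : ℝ)) (by norm_num)
  have h2 := ((summable_nat_add_iff 1).2 h).mul_left (101 / 100 : ℝ)
  refine h2.congr fun s => ?_
  push_cast
  rw [pow_succ]
  ring

lemma partI : Tendsto (fun n : ℕ =>
        ∑ s ∈ Finset.Icc 1 (99 * n / 100),
          ∑ g ∈ Finset.Icc 2 (min (s + 1) ((n - s) / 2)), c n s g)
      atTop (nhds 0) := by
  set T := ∑' s : ℕ, ((s : ℝ) + 1) ^ 2 * (1001 / 1010 : ℝ) ^ s with hT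
  have hlim : Tendsto (fun n : ℕ => (1600 / n : ℝ) * T) atTop (nhds 0) := by
    have := (tendsto_const_div_atTop_nhds_zero_nat (1600 : ℝ)).mul_const T
    simpa using this
  refine tendsto_of_tendsto_of_tendsto_of_le_of_le' tendsto_const_nhds hlim ?_ ?_
  · exact Eventually.of_forall fun n => Finset.sum_nonneg fun s _ => Finset.sum_nonneg fun g _ => c_nonneg n s g
  · filter_upwards [eventually_ge_atTop 800000] with n hn
    calc _ ≤ ∑ s ∈ Finset.Icc 1 (99 * n / 100),
          (1600 / n : ℝ) * (((s : ℝ) + 1) ^ 2 * (1001 / 1010 : ℝ) ^ s) :=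
          Finset.sum_le_sum fun s hs => inner_bound n s hn (Finset.mem_Icc.1 hs).2
      _ = (1600 / n : ℝ) * ∑ s ∈ Finset.Icc 1 (99 * n / 100), (((s : ℝ) + 1) ^ 2 * (1001 / 1010 : ℝ) ^ s) := by
          rw [Finset.mul_sum]
      _ ≤ (1600 / n : ℝ) * T := by
          refine mul_le_mul_of_nonneg_left ?_ (by positivity)
          exact summ1.sum_le_tsum _ fun s _ => by positivity

lemma partII (k : ℕ → ℕ) (hk : Tendsto k atTop atTop) :
    Tendsto (fun n : ℕ => ∑ s ∈ Finset.Icc (k n) (99 * n / 100), c n s 1) atTop (nhds 0) := by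
  set u : ℕ → ℝ := fun s => ((s : ℝ) + 1) * (100 / 101 : ℝ) ^ s with hu
  have hlim : Tendsto (fun n : ℕ => ∑' i, u (i + k n)) atTop (nhds 0) :=
    (tendsto_sum_nat_add u).comp hk
  refine tendsto_of_tendsto_of_tendsto_of_le_of_le' tendsto_const_nhds hlim ?_ ?_
  · exact Eventually.of_forall fun n => Finset.sum_nonneg fun s _ => c_nonneg n s 1
  · filter_upwards [eventually_ge_atTop 1] with n hn
    calc _ ≤ ∑ s ∈ Finset.Icc (k n) (99 * n / 100), u s := by
          refine Finset.sum_le_sum fun s hs => ?_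
          have := c_bound n s 0 hn (Finset.mem_Icc.1 hs).2
          simpa [hu] using this
      _ ≤ ∑ s ∈ (Finset.range (99 * n / 100 + 1)).image (· + k n), u s := by
          refine Finset.sum_le_sum_of_subset_of_nonneg ?_ fun _ _ _ => by simp only [hu]; positivity
          intro s hs
          rw [Finset.mem_Icc] at hs
          exact Finset.mem_image.2 ⟨s - k n, by simp; omega, by omega⟩
      _ = ∑ i ∈ Finset.range (99 * n / 100 + 1), u (i + k n) := by
          rw [Finset.sum_image (fun a _ b _ h => by simpa using h)]
      _ ≤ _ := by
          refine Summable.sum_le_tsum _ (fun _ _ => by simp only [hu]; positivity) ?_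
          exact (summable_nat_add_iff (k n)).2 summ2

end RandomHypercube


open RandomHypercube in
/-- (i) The pair sum over pairs with at least two gaps sharing at most `0.99 n` edges
vanishes; and (ii) for any `k(n) → ∞`, the pair sum over single-gap pairs sharing
between `k(n)` and `0.99 n` edges vanishes. -/
theorem sum_c_up_to_099n_tendsto_zero :
    (Tendsto (fun n : ℕ =>
        ∑ s ∈ Finset.Icc 1 (99 * n / 100),
          ∑ g ∈ Finset.Icc 2 (min (s + 1) ((n - s) / 2)), c n s g)
      atTop (nhds 0)) ∧
    (∀ k : ℕ → ℕ, Tendsto k atTop atTop →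
      Tendsto (fun n : ℕ => ∑ s ∈ Finset.Icc (k n) (99 * n / 100), c n s 1)
        atTop (nhds 0)) := by
  exact ⟨partI, fun k hk => partII k hk⟩
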